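/- Let π: H → K be a surjective morphism of finite-dimensional Hopf algebras with K non-semisimple, and suppose H is generated as an algebra by 1 and a 4-dimensional simple subcoalgebra C stable by S_H². Then the order of S_H² equals the order of S_K². -/

import Mathlib

/-! The core of the argument is a dichotomy for an endomorphism `ψ` of the coalgebra `C` that is
compatible with `π`, in the sense that `π ∘ ψ = π` on `C`: either `ψ = id`, or `K` is semisimple.
It is applied to `ψ = (S_H²)ⁿ|_C`, where `n` is such that `(S_K²)ⁿ = 1`. As `K` is not semisimple,
`(S_H²)ⁿ` is the identity on `C`; being an algebra map and `C` generating `H`, it is the identity.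
Conversely `(S_H²)ⁿ = 1` implies `(S_K²)ⁿ = 1` since `π` is surjective and intertwines antipodes.

For the dichotomy, the convolution algebra `C*` is simple of dimension 4 (`isSimpleRing_dual`), so
it is `M₂(k)` and the transpose `φ` of `ψ` is conjugation by an invertible matrix `g`
(Skolem–Noether). If `φ ≠ id` then `g` is not scalar, and the fixed points of `φ`, the commutant
of `g`, are `k[g] = k·1 + k·N` with `N = g - λ` for an eigenvalue `λ` of `g`, so that `N² = τ N`
(`simple_four_fixed`). The functionals `h ∘ π|_C` with `h ∈ K*` are all fixed by `φ`, so `π(C)` is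
spanned by two elements `u`, `v`, dual to `ε` and `N`, and
`Δ u = u ⊗ u`, `Δ v = u ⊗ v + v ⊗ u + τ v ⊗ v`.
If `τ ≠ 0`, then `u` and `u + τ v` are group-like and generate `K`. If `τ = 0`, then `v u⁻¹` is
primitive, hence zero because `K` is finite-dimensional in characteristic zero
(`primitive_eq_zero`), so the group-like `u` generates `K`. A finite-dimensional Hopf algebra
generated by group-likes is a quotient of the group algebra of a finite group, hence semisimple by
Maschke's theorem (`span_grouplike_semisimple`).
-/

open TensorProduct

/-- A submodule `C` of a coalgebra is a subcoalgebra if `Δ(C) ⊆ C ⊗ C`. -/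
def IsSubcoalgebra (k : Type*) [CommRing k] {H : Type*} [AddCommGroup H] [Module k H]
    [Coalgebra k H] (C : Submodule k H) : Prop :=
  ∀ c ∈ C, Coalgebra.comul (R := k) c ∈ LinearMap.range (TensorProduct.map C.subtype C.subtype)

/-- A subcoalgebra is simple if it is nonzero and has no proper nonzero subcoalgebras. -/
def IsSimpleSubcoalgebra (k : Type*) [CommRing k] {H : Type*} [AddCommGroup H] [Module k H]
    [Coalgebra k H] (C : Submodule k H) : Prop :=
  IsSubcoalgebra k C ∧ C ≠ ⊥ ∧
    ∀ C' : Submodule k H, C' ≤ C → IsSubcoalgebra k C' → C' = ⊥ ∨ C' = C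

/-! ### Fixed points of endomorphisms of `M₂(k)` -/

/-- The commutant of a non-scalar `2 × 2` matrix `N` is `k[N] = k·1 + k·N`. -/
lemma matrix_two_commutant {k : Type*} [Field k] (N X : Matrix (Fin 2) (Fin 2) k)
    (hN : ∀ c : k, N ≠ Matrix.scalar _ c) (h : N * X = X * N) :
    ∃ α β : k, X = α • 1 + β • N := by
  have h00 := congrFun (congrFun h 0) 0
  have h01 := congrFun (congrFun h 0) 1
  have h10 := congrFun (congrFun h 1) 0
  simp only [Matrix.mul_apply, Fin.sum_univ_two] at h00 h01 h10
  suffices ∃ β : k, X 0 1 = β * N 0 1 ∧ X 1 0 = β * N 1 0 ∧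
      X 0 0 - X 1 1 = β * (N 0 0 - N 1 1) by
    obtain ⟨β, h1, h2, h3⟩ := this
    refine ⟨X 0 0 - β * N 0 0, β, ?_⟩
    ext i j
    fin_cases i <;> fin_cases j <;> simp [h1, h2]
    linear_combination -h3
  by_cases hb : N 0 1 = 0
  · by_cases hc : N 1 0 = 0
    · have hd : N 0 0 - N 1 1 ≠ 0 := by
        intro hd
        refine hN (N 0 0) ?_
        ext i j
        fin_cases i <;> fin_cases j <;> simp [hb, hc]
        linear_combination -hd
      refine ⟨(X 0 0 - X 1 1) / (N 0 0 - N 1 1), ?_, ?_, ?_⟩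
      · have : (N 0 0 - N 1 1) * X 0 1 = 0 := by
          linear_combination h01 + (X 0 0 - X 1 1) * hb
        simpa [hd, hb] using this
      · have : (N 0 0 - N 1 1) * X 1 0 = 0 := by
          linear_combination -h10 + (X 0 0 - X 1 1) * hc
        simpa [hd, hc] using this
      · field_simp
    · refine ⟨X 1 0 / N 1 0, ?_, ?_, ?_⟩ <;> field_simp
      · linear_combination -h00
      · linear_combination h10
  · refine ⟨X 0 1 / N 0 1, ?_, ?_, ?_⟩ <;> field_simp
    · linear_combination h00
    · linear_combination -h01

/-- An endomorphism of `M₂(k)` is conjugation by some `g`, so a nontrivial one fixes only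
`k[g] = k·1 + k·N`, where `N` is `g` minus one of its eigenvalues; by Cayley–Hamilton
`N² = tr(N) N`. -/
lemma matrix_two_fixed {k : Type*} [Field k] [IsAlgClosed k]
    (φ : Matrix (Fin 2) (Fin 2) k →ₐ[k] Matrix (Fin 2) (Fin 2) k) :
    φ = AlgHom.id k _ ∨ ∃ (N : Matrix (Fin 2) (Fin 2) k) (τ : k), N * N = τ • N ∧
      (∀ c : k, N ≠ algebraMap k _ c) ∧ ∀ X, φ X = X → ∃ α β : k, X = α • 1 + β • N := by
  obtain ⟨g, h, hgh, hhg, hφ⟩ : ∃ g h : Matrix (Fin 2) (Fin 2) k, g * h = 1 ∧ h * g = 1 ∧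
      ∀ X, φ X = g * X * h := by
    have hinj : Function.Injective φ := RingHom.injective φ.toRingHom
    have hbij : Function.Bijective φ :=
      ⟨hinj, LinearMap.surjective_of_injective (f := φ.toLinearMap) hinj⟩
    -- Skolem–Noether: an automorphism of an endomorphism algebra is conjugation by some `T`.
    let E : Matrix (Fin 2) (Fin 2) k ≃ₐ[k] Module.End k (Fin 2 → k) := Matrix.toLinAlgEquiv'
    obtain ⟨T, hT⟩ :=
      ((E.symm.trans (AlgEquiv.ofBijective φ hbij)).trans E).eq_linearEquivConjAlgEquiv
    refine ⟨E.symm T.toLinearMap, E.symm T.symm.toLinearMap, ?_, ?_, fun X => ?_⟩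
    · rw [← map_mul, ← map_one E.symm]; congr 1; ext; simp
    · rw [← map_mul, ← map_one E.symm]; congr 1; ext; simp
    · have := congrArg E.symm (DFunLike.congr_fun hT (E X))
      simp only [AlgEquiv.trans_apply, AlgEquiv.symm_apply_apply, AlgEquiv.ofBijective_apply] at this
      rw [this]
      apply E.injective
      simp only [map_mul, AlgEquiv.apply_symm_apply]
      ext; simp
  obtain ⟨l, hl⟩ := IsAlgClosed.exists_root g.charpoly (by simp [Matrix.charpoly_degree_eq_dim])
  rw [Polynomial.IsRoot, Matrix.eval_charpoly] at hl
  set N := g - Matrix.scalar (Fin 2) l with hNdef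
  have hdet : N 0 0 * N 1 1 - N 0 1 * N 1 0 = 0 := by
    rw [← Matrix.det_fin_two, ← hl, Matrix.det_fin_two, Matrix.det_fin_two]
    simp [N]; ring
  by_cases hN : N = 0
  · left
    have hg : g = Matrix.scalar (Fin 2) l := sub_eq_zero.mp hN
    ext1 X
    have hc : g * X = X * g := by
      rw [hg]; exact (Matrix.scalar_commute l (fun r => Commute.all _ _) X).eq
    rw [hφ, hc, mul_assoc, hgh, mul_one]; rfl
  · right
    have hns : ∀ c : k, N ≠ Matrix.scalar (Fin 2) c := by
      intro c hc
      rw [hc] at hdet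
      have : c = 0 := by simpa using hdet
      exact hN (by rw [hc, this]; simp)
    refine ⟨N, N 0 0 + N 1 1, ?_, hns, fun X hX => ?_⟩
    · ext i j
      fin_cases i <;> fin_cases j <;> simp [Matrix.mul_apply, Fin.sum_univ_two]
      · linear_combination -hdet
      · ring
      · ring
      · linear_combination -hdet
    · refine matrix_two_commutant N X hns ?_
      have hc : g * X = X * g := by
        conv_rhs => rw [← hX, hφ, mul_assoc, hhg, mul_one]
      have hs := (Matrix.scalar_commute l (fun r => Commute.all _ _) X).eq
      rw [hNdef, sub_mul, mul_sub, hc, hs]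

/-- The same statement for any simple algebra of dimension 4, which is `M₂(k)` by Wedderburn. -/
lemma simple_four_fixed {k A : Type*} [Field k] [IsAlgClosed k] [Ring A] [Algebra k A]
    [IsSimpleRing A] (hdim : Module.finrank k A = 4) (φ : A →ₐ[k] A) :
    φ = AlgHom.id k _ ∨ ∃ (N : A) (τ : k), N * N = τ • N ∧
      (∀ c : k, N ≠ algebraMap k _ c) ∧ ∀ X, φ X = X → ∃ α β : k, X = α • 1 + β • N := by
  have : FiniteDimensional k A := Module.finite_of_finrank_pos (by omega)
  obtain ⟨n, _, ⟨e⟩⟩ := IsSimpleRing.exists_algEquiv_matrix_of_isAlgClosed k A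
  have hn : n = 2 := by
    have := e.toLinearEquiv.finrank_eq
    rw [hdim, Module.finrank_matrix] at this
    simp at this
    nlinarith
  subst hn
  rcases matrix_two_fixed ((e.toAlgHom.comp φ).comp e.symm.toAlgHom) with h | ⟨N, τ, h1, h2, h3⟩
  · left
    ext X
    have := DFunLike.congr_fun h (e X)
    simpa using this
  · right
    refine ⟨e.symm N, τ, by rw [← map_mul, h1, map_smul], fun c hc => h2 c ?_, fun X hX => ?_⟩
    · rw [← e.apply_symm_apply N, hc]; simp
    · obtain ⟨α, β, h⟩ := h3 (e X) (by simp [hX])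
      exact ⟨α, β, e.injective (by simpa using h)⟩

/-! ### Primitive and group-like elements -/

section
open Polynomial


lemma comul_primitive_pow {k K : Type*} [Field k] [Ring K] [HopfAlgebra k K] (x : K)
    (hx : Coalgebra.comul (R := k) x = x ⊗ₜ 1 + 1 ⊗ₜ x) (n : ℕ) :
    Coalgebra.comul (R := k) (x ^ n)
      = ∑ m ∈ Finset.range (n + 1), (n.choose m : k) • ((x ^ m) ⊗ₜ[k] (x ^ (n - m))) := by
  rw [Bialgebra.comul_pow, hx, Commute.add_pow]
  · refine Finset.sum_congr rfl fun m _ => ?_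
    rw [Algebra.TensorProduct.tmul_pow, Algebra.TensorProduct.tmul_pow,
      Algebra.TensorProduct.tmul_mul_tmul, one_pow, one_pow, one_mul, mul_one, Nat.cast_smul_eq_nsmul,
      nsmul_eq_mul, Nat.cast_comm]
  · simp [Commute, SemiconjBy]

/-- A primitive element `x` with `f(1) = 0` and `f(x) = 1` for some functional `f` is not a root of
any nonzero polynomial. The operator `D = (f ⊗ id) ∘ Δ` maps `xⁱ` to `∑ (i choose m) f(xᵐ) xⁱ⁻ᵐ`,
that is, it sends `p(x)` to `q(x)` with `q = ∑ f(xᵐ) p⁽ᵐ⁾ / m!`. As `f(1) = 0` and `f(x) = 1`,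
passing from `p` to `q` lowers the degree by exactly one in characteristic zero, which permits
induction on the degree. -/
lemma primitive_aux {k K : Type*} [Field k] [CharZero k] [Ring K] [HopfAlgebra k K] (x : K)
    (hx : Coalgebra.comul (R := k) x = x ⊗ₜ 1 + 1 ⊗ₜ x) (f : K →ₗ[k] k) (hf1 : f 1 = 0)
    (hfx : f x = 1) (n : ℕ) (p : k[X]) (hp : aeval x p = 0) (hn : p.natDegree ≤ n) : p = 0 := by
  have h1 : (1 : K) ≠ 0 := by
    intro h
    have : x = 0 := by rw [← one_mul x, h, zero_mul]
    simp [this] at hfx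
  induction n generalizing p with
  | zero =>
    rw [Polynomial.eq_C_of_natDegree_le_zero hn] at hp ⊢
    rw [aeval_C, Algebra.algebraMap_eq_smul_one, smul_eq_zero, or_iff_left h1] at hp
    rw [hp, C_0]
  | succ n ih =>
    let D : K →ₗ[k] K := (TensorProduct.lid k K).toLinearMap ∘ₗ f.rTensor K ∘ₗ Coalgebra.comul
    have hD (i : ℕ) (hi : i < n + 2) : D (x ^ i) =
        ∑ m ∈ Finset.range (n + 2), ((i.choose m : k) * f (x ^ m)) • x ^ (i - m) := by
      simp only [D, LinearMap.comp_apply, comul_primitive_pow x hx, map_sum, map_smul,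
        LinearMap.rTensor_tmul, LinearEquiv.coe_coe, TensorProduct.lid_tmul, smul_smul]
      refine Finset.sum_subset (fun m hm => ?_) fun m _ hm => ?_
      · simp at hm ⊢; omega
      · rw [Nat.choose_eq_zero_of_lt (by simpa [Nat.lt_succ_iff] using hm)]; simp
    let q : k[X] := ∑ m ∈ Finset.range (n + 2), f (x ^ m) • hasseDeriv m p
    have hq : aeval x q = D (aeval x p) := by
      have hps := p.as_sum_range' (n + 2) (Nat.lt_succ_of_le hn)
      have hL : D (aeval x p) = ∑ i ∈ Finset.range (n + 2), p.coeff i • D (x ^ i) := by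
        rw [aeval_eq_sum_range' (Nat.lt_succ_of_le hn)]
        simp only [map_sum, map_smul]
      have hR (m : ℕ) : aeval x (hasseDeriv m p) = ∑ i ∈ Finset.range (n + 2),
          p.coeff i • ((i.choose m : k) • x ^ (i - m)) := by
        conv_lhs => rw [hps]
        simp only [map_sum, hasseDeriv_monomial, aeval_monomial, Algebra.smul_def, map_mul,
          map_natCast, mul_assoc]
        refine Finset.sum_congr rfl fun i _ => ?_
        rw [← mul_assoc, ← mul_assoc, Nat.cast_comm]
      rw [hL]
      simp only [q, map_sum, map_smul, hR, Finset.smul_sum]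
      rw [Finset.sum_comm]
      refine Finset.sum_congr rfl fun i hi => ?_
      rw [hD i (Finset.mem_range.mp hi), Finset.smul_sum]
      refine Finset.sum_congr rfl fun m _ => ?_
      simp only [smul_smul]
      congr 1
      ring
    have hcoeff (j : ℕ) (hj : n ≤ j) : q.coeff j = (j + 1) * p.coeff (j + 1) := by
      simp only [q, finsetSum_coeff, coeff_smul, hasseDeriv_coeff, smul_eq_mul]
      rw [Finset.sum_eq_single 1]
      · simp [hfx]
      · intro m _ hm
        rcases Nat.lt_or_ge m 1 with h | h
        · obtain rfl : m = 0 := by omega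
          simp [hf1]
        · rw [coeff_eq_zero_of_natDegree_lt (n := j + m) (by omega)]; simp
      · simp
    have hq0 : q = 0 := by
      refine ih q (by rw [hq, hp, map_zero]) ?_
      rw [natDegree_le_iff_coeff_eq_zero]
      intro j hj
      rw [hcoeff j hj.le, coeff_eq_zero_of_natDegree_lt (n := j + 1) (by omega), mul_zero]
    have hlead : p.coeff (n + 1) = 0 := by
      have := hcoeff n le_rfl
      rw [hq0, coeff_zero] at this
      exact (mul_eq_zero.mp this.symm).resolve_left (by exact_mod_cast n.succ_ne_zero)
    refine ih p hp ?_
    rw [natDegree_le_iff_coeff_eq_zero]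
    intro j hj
    rcases (Nat.succ_le_of_lt hj).eq_or_lt with h | h
    · rw [← h]; exact hlead
    · exact coeff_eq_zero_of_natDegree_lt (hn.trans_lt h)

/-- In characteristic zero a finite-dimensional Hopf algebra has no nonzero primitive elements. -/
lemma primitive_eq_zero {k K : Type*} [Field k] [CharZero k] [Ring K] [HopfAlgebra k K]
    [FiniteDimensional k K] (x : K)
    (hx : Coalgebra.comul (R := k) x = x ⊗ₜ 1 + 1 ⊗ₜ x) : x = 0 := by
  have hε : Coalgebra.counit (R := k) x = 0 := by
    have := congrArg (LinearMap.mul' k k ∘ₗ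
      TensorProduct.map Coalgebra.counit Coalgebra.counit) hx
    have h2 : LinearMap.mul' k k (TensorProduct.map Coalgebra.counit Coalgebra.counit
        (Coalgebra.comul (R := k) x)) = Coalgebra.counit (R := k) x := by
      have := congrArg (Coalgebra.counit (R := k))
        (Coalgebra.sum_counit_smul (Coalgebra.Repr.arbitrary k x))
      rw [← (Coalgebra.Repr.arbitrary k x).eq]
      simpa only [map_sum, map_smul, TensorProduct.map_tmul, LinearMap.mul'_apply,
        smul_eq_mul] using this
    rw [LinearMap.comp_apply, LinearMap.comp_apply, h2] at this
    simpa using this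
  by_contra hx0
  obtain ⟨f0, hf0⟩ := Module.Projective.exists_dual_ne_zero k hx0
  -- Since `ε(1) = 1` and `ε(x) = 0`, this functional vanishes at `1` and takes the value `1` at `x`.
  let f : K →ₗ[k] k := (f0 x)⁻¹ • (f0 - f0 1 • Coalgebra.counit)
  obtain ⟨p, hp0, hp⟩ := Algebra.IsIntegral.isIntegral (R := k) x
  refine hp0.ne_zero (primitive_aux x hx f ?_ ?_ _ p hp le_rfl)
  · simp [f]
  · simp [f, hε, hf0]

end

/-- A finite-dimensional Hopf algebra generated by group-likes is a quotient of the group algebra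
of its (finite) group of group-likes, hence semisimple by Maschke's theorem. -/
lemma span_grouplike_semisimple {k K : Type*} [Field k] [CharZero k] [Ring K] [HopfAlgebra k K]
    [FiniteDimensional k K] (s : Set K) (hs : ∀ x ∈ s, IsGroupLikeElem k x)
    (h : Algebra.adjoin k s = ⊤) : IsSemisimpleRing K := by
  have : Finite (GroupLike k K) := (linearIndep_groupLikeVal (R := k) (A := K)).finite
  let F : MonoidAlgebra k (GroupLike k K) →ₐ[k] K :=
    MonoidAlgebra.lift k K _ (GroupLike.valMonoidHom (R := k) (A := K))
  have hF : Function.Surjective F := by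
    rw [← AlgHom.range_eq_top, ← top_le_iff, ← h, Algebra.adjoin_le_iff]
    intro x hx
    exact ⟨MonoidAlgebra.of k _ ⟨x, hs x hx⟩, by simp [F]⟩
  have : NeZero (Nat.card (GroupLike k K) : k) := ⟨by simp [Nat.card_pos.ne']⟩
  exact RingHom.isSemisimpleRing_of_surjective F.toRingHom hF

/-! ### The square of the antipode -/

/-- Bialgebra maps commute with antipodes: `π ∘ S_H` and `S_K ∘ π` are both convolution inverses
of `π`. -/
lemma antipode_bialgHom {k H K : Type*} [Field k] [Ring H] [HopfAlgebra k H] [Ring K]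
    [HopfAlgebra k K] (π : H →ₐc[k] K) (x : H) :
    π (HopfAlgebra.antipode k x) = HopfAlgebra.antipode k (π x) := by
  let p : H →ₗ[k] K := π.toCoalgHom.toLinearMap
  have key : WithConv.toConv (p ∘ₗ HopfAlgebra.antipode k)
      = WithConv.toConv (HopfAlgebra.antipode k ∘ₗ p) := by
    apply left_inv_eq_right_inv (a := WithConv.toConv p)
    · have := LinearMap.algHom_comp_convMul_distrib (π : H →ₐ[k] K)
        (WithConv.toConv (HopfAlgebra.antipode k (A := H))) (WithConv.toConv LinearMap.id)
      rw [LinearMap.antipode_mul_id] at this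
      apply WithConv.ofConv_injective
      refine this.symm.trans ?_
      ext x
      exact AlgHom.commutes (π : H →ₐ[k] K) _
    · have := LinearMap.convMul_comp_coalgHom_distrib
        (WithConv.toConv LinearMap.id) (WithConv.toConv (HopfAlgebra.antipode k (A := K))) π.toCoalgHom
      rw [LinearMap.id_mul_antipode] at this
      apply WithConv.ofConv_injective
      refine this.symm.trans ?_
      ext x; simp
  exact LinearMap.congr_fun (congrArg WithConv.ofConv key) x

/-- The coassociativity rule
`(x₁ ⊗ x₂) ⊗ (x₃ ⊗ x₄) = x₁ ⊗ ((x₂ ⊗ x₃) ⊗ x₄)`, with `x₂ ⊗ x₃` the coproduct of one factor. -/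
lemma comul_four {k H : Type*} [Field k] [AddCommGroup H] [Module k H] [Coalgebra k H] :
    TensorProduct.map (Coalgebra.comul (R := k) (A := H)) Coalgebra.comul ∘ₗ Coalgebra.comul =
      (TensorProduct.assoc k H H (H ⊗[k] H)).symm.toLinearMap ∘ₗ
      TensorProduct.map LinearMap.id ((TensorProduct.assoc k H H H).toLinearMap ∘ₗ
        TensorProduct.map Coalgebra.comul LinearMap.id ∘ₗ Coalgebra.comul) ∘ₗ Coalgebra.comul := by
  simp only [coassoc_simps]

/-- The antipode is an anti-coalgebra map. Both sides are convolution inverses of `Δ` in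
`Hom(H, H ⊗ H)`; for the right-hand side this is the computation
`(S(x₂) ⊗ S(x₁)) (x₃ ⊗ x₄) = S(x₂) x₃ ⊗ S(x₁) x₄ = 1 ⊗ S(x₁) x₂ = ε(x) 1 ⊗ 1`. -/
lemma comul_comp_antipode {k H : Type*} [Field k] [Ring H] [HopfAlgebra k H] :
    Coalgebra.comul ∘ₗ HopfAlgebra.antipode k (A := H)
      = TensorProduct.map (HopfAlgebra.antipode k) (HopfAlgebra.antipode k)
        ∘ₗ (TensorProduct.comm k H H).toLinearMap ∘ₗ Coalgebra.comul := by
  apply WithConv.toConv_injective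
  symm
  refine left_inv_eq_right_inv (a := WithConv.toConv Coalgebra.comul) ?_ LinearMap.comul_right_inv
  let S : H →ₗ[k] H := HopfAlgebra.antipode k
  let c : H →ₗ[k] H ⊗[k] H := Coalgebra.comul
  let m : H ⊗[k] H →ₗ[k] H := LinearMap.mul' k H
  -- `(a ⊗ b) ⊗ (c ⊗ d) ↦ S(b) c ⊗ S(a) d`
  let T : (H ⊗[k] H) ⊗[k] (H ⊗[k] H) →ₗ[k] H ⊗[k] H :=
    LinearMap.mul' k (H ⊗[k] H) ∘ₗ TensorProduct.map
      (TensorProduct.map S S ∘ₗ (TensorProduct.comm k H H).toLinearMap) LinearMap.id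
  have hT : T ∘ₗ (TensorProduct.assoc k H H (H ⊗[k] H)).symm.toLinearMap ∘ₗ
      TensorProduct.map LinearMap.id (TensorProduct.assoc k H H H).toLinearMap =
      TensorProduct.map LinearMap.id m ∘ₗ (TensorProduct.leftComm k H H H).toLinearMap ∘ₗ
        TensorProduct.map S (TensorProduct.map (m ∘ₗ S.rTensor H) LinearMap.id) := by
    ext a b c d
    simp [T, m]
  have h2 : TensorProduct.map (m ∘ₗ S.rTensor H) LinearMap.id ∘ₗ TensorProduct.map c LinearMap.id ∘ₗ c
      = TensorProduct.mk k H H 1 := by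
    rw [← LinearMap.comp_assoc, ← TensorProduct.map_comp, LinearMap.comp_assoc,
      HopfAlgebra.mul_antipode_rTensor_comul, LinearMap.id_comp]
    ext a
    change ((Algebra.linearMap k H) ∘ₗ Coalgebra.counit).rTensor H (Coalgebra.comul a) = _
    rw [LinearMap.rTensor_comp, LinearMap.comp_apply, Coalgebra.rTensor_counit_comul]
    simp
  have h3 : TensorProduct.map LinearMap.id m ∘ₗ (TensorProduct.leftComm k H H H).toLinearMap ∘ₗ
      TensorProduct.map S (TensorProduct.mk k H H 1) = TensorProduct.mk k H H 1 ∘ₗ m ∘ₗ S.rTensor H := by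
    ext a b
    simp [m]
  apply WithConv.ofConv_injective
  calc _ = T ∘ₗ TensorProduct.map c c ∘ₗ c := by
        rw [LinearMap.comp_assoc, CoassocSimps.TensorProduct.map_comp_assoc]
        rfl
    _ = (T ∘ₗ (TensorProduct.assoc k H H (H ⊗[k] H)).symm.toLinearMap ∘ₗ
      TensorProduct.map LinearMap.id (TensorProduct.assoc k H H H).toLinearMap) ∘ₗ
        TensorProduct.map LinearMap.id (TensorProduct.map c LinearMap.id ∘ₗ c) ∘ₗ c := by
        rw [comul_four]
        simp only [LinearMap.comp_assoc]
        congr 2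
        rw [CoassocSimps.TensorProduct.map_comp_assoc]
        rfl
    _ = TensorProduct.mk k H H 1 ∘ₗ (m ∘ₗ S.rTensor H ∘ₗ c) := by
        rw [hT]
        simp only [LinearMap.comp_assoc]
        rw [CoassocSimps.TensorProduct.map_comp_assoc, h2, LinearMap.comp_id,
          ← LinearMap.comp_assoc, ← LinearMap.comp_assoc, LinearMap.comp_assoc (TensorProduct.map S _), h3]
        rfl
    _ = _ := by
        rw [HopfAlgebra.mul_antipode_rTensor_comul]
        ext a
        simp [Algebra.algebraMap_eq_smul_one, Algebra.TensorProduct.one_def]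

lemma antipode_sq_comul {k H : Type*} [Field k] [Ring H] [HopfAlgebra k H] (x : H) :
    TensorProduct.map (HopfAlgebra.antipode k ^ 2 : Module.End k H) (HopfAlgebra.antipode k ^ 2 : Module.End k H)
      (Coalgebra.comul x) = Coalgebra.comul ((HopfAlgebra.antipode k ^ 2 : Module.End k H) x) := by
  have h := fun x => LinearMap.congr_fun (comul_comp_antipode (k := k) (H := H)) x
  simp only [LinearMap.comp_apply, LinearEquiv.coe_coe] at h
  rw [pow_two, Module.End.mul_apply, h, h, ← TensorProduct.map_comm, TensorProduct.comm_comm,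
    Module.End.mul_eq_comp, TensorProduct.map_comp]
  rfl

/-- The square of the antipode, as an algebra endomorphism. -/
noncomputable def antipodeSq (k H : Type*) [Field k] [Ring H] [HopfAlgebra k H] : H →ₐ[k] H :=
  AlgHom.ofLinearMap (HopfAlgebra.antipode k ^ 2 : Module.End k H) (by simp [pow_two])
    (by simp [pow_two, HopfAlgebra.antipode_mul_antidistrib])

/-! ### Subcoalgebras and their dual algebras -/

/-- The functionals `f ⊗ g` separate the points of `D ⊗ D`. -/
lemma tensor_eq_zero_of_dual {k D : Type*} [Field k] [AddCommGroup D] [Module k D]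
    [FiniteDimensional k D] (y : D ⊗[k] D)
    (h : ∀ f g : D →ₗ[k] k, LinearMap.mul' k k (TensorProduct.map f g y) = 0) : y = 0 := by
  let b := Module.finBasis k D
  have key (y : D ⊗[k] D) (i j) : (b.tensorProduct b).repr y (i, j) =
      LinearMap.mul' k k (TensorProduct.map (b.coord i) (b.coord j) y) := by
    induction y using TensorProduct.induction_on with
    | zero => simp
    | tmul x y => simp [mul_comm]
    | add x y hx hy => simp only [map_add, Finsupp.add_apply, hx, hy]
  apply (b.tensorProduct b).repr.injective
  ext ⟨i, j⟩
  rw [key, h, map_zero, Finsupp.zero_apply]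

/-- The convolution algebra of a simple coalgebra is simple: the annihilator of a two-sided ideal
is a subcoalgebra. -/
lemma isSimpleRing_dual {k D : Type*} [Field k] [AddCommGroup D] [Module k D] [Coalgebra k D]
    [FiniteDimensional k D] [Nontrivial D]
    (hD : ∀ J : Submodule k D, IsSubcoalgebra k J → J = ⊥ ∨ J = ⊤) :
    IsSimpleRing (WithConv (D →ₗ[k] k)) := by
  have hnt : Nontrivial (WithConv (D →ₗ[k] k)) := WithConv.toConv_injective.nontrivial
  refine ⟨⟨fun I => ?_⟩⟩
  let I' : Submodule k (Module.Dual k D) :=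
    { carrier := {f | WithConv.toConv f ∈ I}
      zero_mem' := I.zero_mem
      add_mem' := fun ha hb => I.add_mem ha hb
      smul_mem' := fun r f hf => by
        have := I.mul_mem_left (r • 1) _ hf
        rwa [smul_mul_assoc, one_mul] at this }
  have hann (f : Module.Dual k D) (hf : ∀ c ∈ I'.dualCoannihilator, f c = 0) : f ∈ I' := by
    rw [← Subspace.dualCoannihilator_dualAnnihilator_eq (W := I')]
    exact (Submodule.mem_dualAnnihilator f).mpr hf
  have hsub : IsSubcoalgebra k I'.dualCoannihilator := by
    intro c hc
    set J := I'.dualCoannihilator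
    have hc' (f : Module.Dual k D) (hf : f ∈ I') : f c = 0 :=
      (Submodule.mem_dualCoannihilator c).mp hc f hf
    obtain ⟨q, hq⟩ := J.subtype.exists_leftInverse_of_injective (Submodule.ker_subtype J)
    have hq' (c : D) (h : c ∈ J) : (q c : D) = c :=
      congrArg Subtype.val (LinearMap.congr_fun hq ⟨c, h⟩)
    let P : D →ₗ[k] D := J.subtype ∘ₗ q
    -- For a projection `P` onto the annihilator `J` and `c ∈ J`, the difference
    -- `(f ∘ P) * (g ∘ P) - f * g` lies in `I`, so `Δ c` and `(P ⊗ P) (Δ c)` pair equally with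
    -- every `f ⊗ g`.
    suffices h : TensorProduct.map P P (Coalgebra.comul c) = Coalgebra.comul c by
      rw [← h, TensorProduct.map_comp]
      exact ⟨_, rfl⟩
    rw [← sub_eq_zero]
    refine tensor_eq_zero_of_dual _ fun f g => ?_
    have hP (f : D →ₗ[k] k) : WithConv.toConv (f ∘ₗ P - f) ∈ I :=
      hann _ fun c h => by simp [P, hq' c h]
    have hmem : WithConv.toConv (f ∘ₗ P) * WithConv.toConv (g ∘ₗ P - g) +
        WithConv.toConv (f ∘ₗ P - f) * WithConv.toConv g ∈ I :=
      I.add_mem (I.mul_mem_left _ _ (hP g)) (I.mul_mem_right _ _ (hP f))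
    rw [WithConv.toConv_sub, WithConv.toConv_sub, mul_sub, sub_mul, sub_add_sub_cancel] at hmem
    have h0 := hc' (WithConv.ofConv _) hmem
    rw [map_sub, map_sub, ← LinearMap.comp_apply (TensorProduct.map f g), ← TensorProduct.map_comp]
    exact h0
  rcases hD _ hsub with h | h
  · right
    rw [eq_top_iff]
    intro f _
    refine hann f.ofConv fun c hc => ?_
    rw [h, Submodule.mem_bot] at hc
    rw [hc, map_zero]
  · left
    rw [eq_bot_iff]
    intro f hf
    have : f = 0 := by
      apply WithConv.ofConv_injective
      ext c
      exact (Submodule.mem_dualCoannihilator c).mp (h ▸ Submodule.mem_top : c ∈ _) f.ofConv hf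
    rw [this]
    exact TwoSidedIdeal.zero_mem _

/-- The comultiplication of a subcoalgebra `C`, obtained by restricting the one of the ambient
coalgebra to `C` and corestricting it along the injection `C ⊗ C → H ⊗ H`. -/
noncomputable def IsSubcoalgebra.comul {k H : Type*} [Field k] [AddCommGroup H] [Module k H]
    [Coalgebra k H] {C : Submodule k H} (hC : IsSubcoalgebra k C) : C →ₗ[k] C ⊗[k] C :=
  (LinearEquiv.ofInjective (TensorProduct.map C.subtype C.subtype)
      (TensorProduct.map_injective_of_flat_flat _ _ C.subtype_injective
        C.subtype_injective)).symm.toLinearMap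
    ∘ₗ (Coalgebra.comul ∘ₗ C.subtype).codRestrict _ fun c => hC c c.2

lemma IsSubcoalgebra.map_comp_comul {k H : Type*} [Field k] [AddCommGroup H] [Module k H]
    [Coalgebra k H] {C : Submodule k H} (hC : IsSubcoalgebra k C) :
    TensorProduct.map C.subtype C.subtype ∘ₗ hC.comul = Coalgebra.comul ∘ₗ C.subtype := by
  ext c
  exact congrArg Subtype.val
    ((LinearEquiv.ofInjective (TensorProduct.map C.subtype C.subtype)
      (TensorProduct.map_injective_of_flat_flat _ _ C.subtype_injective
        C.subtype_injective)).apply_symm_apply _)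

/-- A subcoalgebra is a coalgebra for the restricted comultiplication and counit. -/
noncomputable abbrev IsSubcoalgebra.coalgebra {k H : Type*} [Field k] [AddCommGroup H] [Module k H]
    [Coalgebra k H] {C : Submodule k H} (hC : IsSubcoalgebra k C) : Coalgebra k C where
  comul := hC.comul
  counit := Coalgebra.counit ∘ₗ C.subtype
  coassoc := by
    have hι : Function.Injective C.subtype := C.subtype_injective
    have hd := hC.map_comp_comul
    generalize hC.comul = d at *
    generalize C.subtype = ι at *
    have hιι : Function.Injective (TensorProduct.map ι ι) :=
      TensorProduct.map_injective_of_flat_flat _ _ hι hι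
    have hιιι : Function.Injective (TensorProduct.map ι (TensorProduct.map ι ι)) :=
      TensorProduct.map_injective_of_flat_flat _ _ hι hιι
    refine LinearMap.cancel_left hιιι |>.mp ?_
    have h1 : TensorProduct.map (TensorProduct.map ι ι) ι ∘ₗ d.rTensor C ∘ₗ d =
        Coalgebra.comul.rTensor H ∘ₗ Coalgebra.comul ∘ₗ ι := by
      rw [← hd, ← LinearMap.comp_assoc, ← LinearMap.comp_assoc, LinearMap.rTensor,
        LinearMap.rTensor, ← TensorProduct.map_comp, ← TensorProduct.map_comp, hd]
      rfl
    have h2 : TensorProduct.map ι (TensorProduct.map ι ι) ∘ₗ d.lTensor C ∘ₗ d =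
        Coalgebra.comul.lTensor H ∘ₗ Coalgebra.comul ∘ₗ ι := by
      rw [← hd, ← LinearMap.comp_assoc, ← LinearMap.comp_assoc, LinearMap.lTensor,
        LinearMap.lTensor, ← TensorProduct.map_comp, ← TensorProduct.map_comp, hd]
      rfl
    rw [h2, ← LinearMap.comp_assoc, TensorProduct.map_map_comp_assoc_eq, LinearMap.comp_assoc, h1]
    ext x
    exact Coalgebra.coassoc_apply (ι x)
  rTensor_counit_comp_comul := by
    have hι : Function.Injective C.subtype := C.subtype_injective
    have hd := hC.map_comp_comul
    generalize hC.comul = d at *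
    generalize C.subtype = ι at *
    have : Function.Injective (ι.lTensor k) :=
      Module.Flat.lTensor_preserves_injective_linearMap _ hι
    refine LinearMap.cancel_left this |>.mp ?_
    have h1 : ι.lTensor k ∘ₗ (Coalgebra.counit (R := k) ∘ₗ ι).rTensor C ∘ₗ d =
        Coalgebra.counit.rTensor H ∘ₗ TensorProduct.map ι ι ∘ₗ d := by
      rw [← LinearMap.comp_assoc, ← LinearMap.comp_assoc, LinearMap.rTensor, LinearMap.lTensor,
        LinearMap.rTensor, ← TensorProduct.map_comp, ← TensorProduct.map_comp]
      rfl
    rw [h1, hd, ← LinearMap.comp_assoc, Coalgebra.rTensor_counit_comp_comul]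
    ext; simp
  lTensor_counit_comp_comul := by
    have hι : Function.Injective C.subtype := C.subtype_injective
    have hd := hC.map_comp_comul
    generalize hC.comul = d at *
    generalize C.subtype = ι at *
    have : Function.Injective (ι.rTensor k) :=
      Module.Flat.rTensor_preserves_injective_linearMap _ hι
    refine LinearMap.cancel_left this |>.mp ?_
    have h1 : ι.rTensor k ∘ₗ (Coalgebra.counit (R := k) ∘ₗ ι).lTensor C ∘ₗ d =
        Coalgebra.counit.lTensor H ∘ₗ TensorProduct.map ι ι ∘ₗ d := by
      rw [← LinearMap.comp_assoc, ← LinearMap.comp_assoc, LinearMap.rTensor, LinearMap.lTensor,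
        LinearMap.lTensor, ← TensorProduct.map_comp, ← TensorProduct.map_comp]
      rfl
    rw [h1, hd, ← LinearMap.comp_assoc, Coalgebra.lTensor_counit_comp_comul]
    ext; simp

/-- A simple subcoalgebra is simple as a coalgebra in its own right. -/
lemma IsSimpleSubcoalgebra.eq_bot_or_top {k H : Type*} [Field k] [AddCommGroup H] [Module k H]
    [Coalgebra k H] {C : Submodule k H} (hC : IsSimpleSubcoalgebra k C) (J : Submodule k C)
    (hJ : letI := hC.1.coalgebra; IsSubcoalgebra k J) : J = ⊥ ∨ J = ⊤ := by
  let := hC.1.coalgebra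
  have hle : J.map C.subtype ≤ C := Submodule.map_subtype_le C J
  have hsub : IsSubcoalgebra k (J.map C.subtype) := by
    rintro _ ⟨c, hc, rfl⟩
    obtain ⟨y, hy⟩ := hJ c hc
    let r : J →ₗ[k] J.map C.subtype := C.subtype.submoduleMap J
    refine ⟨TensorProduct.map r r y, ?_⟩
    have h1 : Coalgebra.comul (c : H) = TensorProduct.map C.subtype C.subtype
        (TensorProduct.map J.subtype J.subtype y) := by
      rw [hy]
      exact (LinearMap.congr_fun hC.1.map_comp_comul c).symm
    rw [Submodule.subtype_apply, h1, ← LinearMap.comp_apply, ← LinearMap.comp_apply,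
      ← TensorProduct.map_comp, ← TensorProduct.map_comp]
    rfl
  rcases hC.2.2 _ hle hsub with h | h
  · left
    exact Submodule.map_injective_of_injective C.subtype_injective (h.trans (Submodule.map_bot _).symm)
  · right
    rw [eq_top_iff]
    rintro c -
    have : (c : H) ∈ J.map C.subtype := by rw [h]; exact c.2
    obtain ⟨c', hc', h'⟩ := this
    rwa [← Subtype.ext h']

/-! ### The dichotomy -/

/-- A Hopf algebra generated by a group-like `u` and an element `v` with
`Δ v = u ⊗ v + v ⊗ u + τ v ⊗ v` is generated by group-likes: by `u` and `u + τ v` if `τ ≠ 0`, and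
by `u` alone if `τ = 0`, because then `v u⁻¹` is primitive and so `v = 0`. -/
lemma isSemisimpleRing_of_adjoin_pair {k K : Type*} [Field k] [CharZero k] [Ring K]
    [HopfAlgebra k K] [FiniteDimensional k K] {u v : K} {τ : k} (hu : IsGroupLikeElem k u)
    (hεv : Coalgebra.counit (R := k) v = 0)
    (hv : Coalgebra.comul (R := k) v = u ⊗ₜ v + v ⊗ₜ u + τ • (v ⊗ₜ v))
    (hgen : Algebra.adjoin k {u, v} = ⊤) : IsSemisimpleRing K := by
  by_cases hτ : τ = 0
  · have ha : IsGroupLikeElem k (HopfAlgebra.antipode k u) := hu.antipode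
    have hp : v * HopfAlgebra.antipode k u = 0 := by
      apply primitive_eq_zero (k := k)
      rw [Bialgebra.comul_mul, ha.comul_eq_tmul_self, hv, hτ, zero_smul, add_zero, add_mul,
        Algebra.TensorProduct.tmul_mul_tmul, Algebra.TensorProduct.tmul_mul_tmul,
        hu.mul_antipode_cancel, add_comm]
    have hv0 : v = 0 := by
      rw [← mul_one v, ← hu.antipode_mul_cancel (R := k), ← mul_assoc, hp, zero_mul]
    refine span_grouplike_semisimple (k := k) {u} (by simpa using hu) ?_
    rw [← top_le_iff, ← hgen, Algebra.adjoin_le_iff]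
    rintro x (rfl | rfl)
    · exact Algebra.subset_adjoin rfl
    · rw [hv0]; exact zero_mem _
  · have hw : IsGroupLikeElem k (u + τ • v) := by
      refine ⟨by simp [hu.counit_eq_one, hεv], ?_⟩
      simp only [map_add, map_smul, hu.comul_eq_tmul_self, hv, add_tmul, tmul_add, smul_tmul',
        tmul_smul, smul_add, smul_smul]
      abel
    refine span_grouplike_semisimple (k := k) {u, u + τ • v} ?_ ?_
    · rintro x (rfl | rfl)
      · exact hu
      · exact hw
    · have hu' : u ∈ Algebra.adjoin k {u, u + τ • v} := Algebra.subset_adjoin (by simp)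
      have hw' : u + τ • v ∈ Algebra.adjoin k {u, u + τ • v} := Algebra.subset_adjoin (by simp)
      rw [← top_le_iff, ← hgen, Algebra.adjoin_le_iff]
      rintro x (rfl | rfl)
      · exact hu'
      · have := Subalgebra.smul_mem _ (sub_mem hw' hu') τ⁻¹
        rwa [add_sub_cancel_left, inv_smul_smul₀ hτ] at this

/-- A coalgebra endomorphism of a four-dimensional simple coalgebra `D` over which a map to a Hopf
algebra `K` is invariant is the identity, unless `K` is semisimple; here the image of `D`
generates `K`. -/
lemma eq_id_or_isSemisimpleRing {k D K : Type*} [Field k] [IsAlgClosed k] [CharZero k]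
    [AddCommGroup D] [Module k D] [Coalgebra k D] [FiniteDimensional k D]
    [IsSimpleRing (WithConv (D →ₗ[k] k))] (hdim : Module.finrank k D = 4)
    [Ring K] [HopfAlgebra k K] [FiniteDimensional k K] (ρ : D →ₗc[k] K) (ψ : D →ₗc[k] D)
    (hρψ : ∀ c, ρ (ψ c) = ρ c) (hgen : Algebra.adjoin k (Set.range ρ) = ⊤) :
    (∀ c, ψ c = c) ∨ IsSemisimpleRing K := by
  let A := WithConv (D →ₗ[k] k)
  have hdimA : Module.finrank k A = 4 := by
    rw [(WithConv.linearEquiv k (D →ₗ[k] k)).finrank_eq]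
    exact Subspace.dual_finrank_eq.trans hdim
  -- `φ` is the transpose `f ↦ f ∘ ψ`.
  let φ : A →ₐ[k] A := AlgHom.ofLinearMap
    ((WithConv.linearEquiv k (D →ₗ[k] k)).symm.toLinearMap ∘ₗ ψ.toLinearMap.lcomp k k ∘ₗ
      (WithConv.linearEquiv k (D →ₗ[k] k)).toLinearMap)
    (by
      apply WithConv.ofConv_injective
      ext c
      exact LinearMap.congr_fun ψ.counit_comp c)
    (fun f g => WithConv.ofConv_injective (LinearMap.convMul_comp_coalgHom_distrib f g ψ))
  have hφ (f : A) (c : D) : (φ f).ofConv c = f.ofConv (ψ c) := rfl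
  rcases simple_four_fixed hdimA φ with h | ⟨N, τ, hN, hNs, hfix⟩
  · left
    intro c
    rw [← sub_eq_zero, ← Module.forall_dual_apply_eq_zero_iff k]
    intro f
    have := hφ (WithConv.toConv f) c
    rw [h] at this
    rw [map_sub, sub_eq_zero]
    exact this.symm
  · right
    let ε : D →ₗ[k] k := Coalgebra.counit
    let n : D →ₗ[k] k := N.ofConv
    have hnε (a : k) : n ≠ a • ε := by
      intro h
      apply hNs a
      apply WithConv.ofConv_injective
      ext c
      exact LinearMap.congr_fun h c
    have hε : ε ≠ 0 := fun h => one_ne_zero (α := A) (WithConv.ofConv_injective (by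
      ext c
      exact LinearMap.congr_fun h c))
    -- `ε` and `n` are linearly independent, so there is a pair `c1`, `c2` dual to them.
    obtain ⟨c0, hc0⟩ : ∃ c, ε c = 1 := LinearMap.surjective hε 1
    obtain ⟨c2, hc2, hn2⟩ : ∃ c, ε c = 0 ∧ n c = 1 := by
      by_contra! hne
      apply hnε (n c0)
      ext c
      by_contra hc
      have hd : n (c - ε c • c0) ≠ 0 := by
        rw [map_sub, map_smul, smul_eq_mul, mul_comm]
        exact sub_ne_zero.mpr hc
      refine hne ((n (c - ε c • c0))⁻¹ • (c - ε c • c0)) (by simp [hc0]) ?_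
      rw [map_smul, smul_eq_mul, inv_mul_cancel₀ hd]
    obtain ⟨c1, hc1, hn1⟩ : ∃ c, ε c = 1 ∧ n c = 0 :=
      ⟨c0 - n c0 • c2, by simp [hc0, hc2], by simp [hn2]⟩
    -- Every functional `h ∘ ρ` is fixed by `φ`, hence a combination of `ε` and `n`.
    have hdec (h : K →ₗ[k] k) (c : D) : h (ρ c) = ε c * h (ρ c1) + n c * h (ρ c2) := by
      obtain ⟨α, β, hαβ⟩ := hfix (WithConv.toConv (h ∘ₗ ρ.toLinearMap)) (by
        apply WithConv.ofConv_injective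
        ext c
        exact congrArg h (hρψ c))
      have key (c : D) : h (ρ c) = α * ε c + β * n c :=
        LinearMap.congr_fun (congrArg WithConv.ofConv hαβ) c
      rw [key c, key c1, key c2, hc1, hn1, hc2, hn2]
      ring
    have hρ (c : D) : ρ c = ε c • ρ c1 + n c • ρ c2 := by
      rw [← sub_eq_zero, ← Module.forall_dual_apply_eq_zero_iff k]
      intro h
      rw [map_sub, hdec h c]
      simp
    have hρρ (x : D ⊗[k] D) : TensorProduct.map ρ.toLinearMap ρ.toLinearMap x =
        LinearMap.mul' k k (TensorProduct.map ε ε x) • (ρ c1 ⊗ₜ[k] ρ c1) +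
        LinearMap.mul' k k (TensorProduct.map ε n x) • (ρ c1 ⊗ₜ[k] ρ c2) +
        LinearMap.mul' k k (TensorProduct.map n ε x) • (ρ c2 ⊗ₜ[k] ρ c1) +
        LinearMap.mul' k k (TensorProduct.map n n x) • (ρ c2 ⊗ₜ[k] ρ c2) := by
      induction x using TensorProduct.induction_on with
      | zero => simp
      | tmul x y =>
        have h1 : TensorProduct.map ρ.toLinearMap ρ.toLinearMap (x ⊗ₜ[k] y) = ρ x ⊗ₜ[k] ρ y := rfl
        rw [h1, hρ x, hρ y]
        simp only [add_tmul, tmul_add, map_tmul, LinearMap.mul'_apply, ← smul_tmul', tmul_smul,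
          smul_smul, smul_add, mul_comm (ε y), mul_comm (n y)]
        abel
      | add x y hx hy =>
        simp only [map_add, hx, hy, add_smul]
        abel
    have hcomul (c : D) : Coalgebra.comul (R := k) (ρ c) = ε c • (ρ c1 ⊗ₜ[k] ρ c1) +
        n c • (ρ c1 ⊗ₜ[k] ρ c2) + n c • (ρ c2 ⊗ₜ[k] ρ c1) + (τ * n c) • (ρ c2 ⊗ₜ[k] ρ c2) := by
      have h1 : Coalgebra.comul (R := k) (ρ c)
          = TensorProduct.map ρ.toLinearMap ρ.toLinearMap (Coalgebra.comul c) :=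
        (LinearMap.congr_fun ρ.map_comp_comul c).symm
      have e1 : LinearMap.mul' k k (TensorProduct.map ε ε (Coalgebra.comul c)) = ε c :=
        LinearMap.congr_fun (congrArg WithConv.ofConv (one_mul (1 : A))) c
      have e2 : LinearMap.mul' k k (TensorProduct.map ε n (Coalgebra.comul c)) = n c :=
        LinearMap.congr_fun (congrArg WithConv.ofConv (one_mul N)) c
      have e3 : LinearMap.mul' k k (TensorProduct.map n ε (Coalgebra.comul c)) = n c :=
        LinearMap.congr_fun (congrArg WithConv.ofConv (mul_one N)) c
      have e4 : LinearMap.mul' k k (TensorProduct.map n n (Coalgebra.comul c)) = τ * n c :=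
        LinearMap.congr_fun (congrArg WithConv.ofConv hN) c
      rw [h1, hρρ, e1, e2, e3, e4]
    have hcounit (c : D) : Coalgebra.counit (R := k) (ρ c) = ε c :=
      LinearMap.congr_fun ρ.counit_comp c
    refine isSemisimpleRing_of_adjoin_pair (k := k) (u := ρ c1) (v := ρ c2) (τ := τ)
      ⟨?_, ?_⟩ ?_ ?_ ?_
    · rw [hcounit, hc1]
    · simp [hcomul, hc1, hn1]
    · rw [hcounit, hc2]
    · simp [hcomul, hc2, hn2]
    · rw [← top_le_iff, ← hgen, Algebra.adjoin_le_iff]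
      rintro _ ⟨c, rfl⟩
      rw [SetLike.mem_coe, hρ c]
      exact add_mem (Subalgebra.smul_mem _ (Algebra.subset_adjoin (by simp)) _)
        (Subalgebra.smul_mem _ (Algebra.subset_adjoin (by simp)) _)

/-! ### Powers of the square of the antipode -/

lemma antipodeSq_pow_apply {k H : Type*} [Field k] [Ring H] [HopfAlgebra k H] (n : ℕ) (x : H) :
    (antipodeSq k H ^ n) x = ((HopfAlgebra.antipode k ^ 2 : Module.End k H) ^ n) x := by
  induction n generalizing x with
  | zero => rfl
  | succ n ih =>
    rw [pow_succ _ n, pow_succ _ n, AlgHom.mul_apply, Module.End.mul_apply, ih]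
    rfl

lemma antipode_sq_pow_comul {k H : Type*} [Field k] [Ring H] [HopfAlgebra k H] (n : ℕ) (x : H) :
    TensorProduct.map ((HopfAlgebra.antipode k ^ 2 : Module.End k H) ^ n)
      ((HopfAlgebra.antipode k ^ 2 : Module.End k H) ^ n) (Coalgebra.comul x)
      = Coalgebra.comul (((HopfAlgebra.antipode k ^ 2 : Module.End k H) ^ n) x) := by
  rw [← TensorProduct.map_pow]
  induction n generalizing x with
  | zero => rfl
  | succ n ih =>
    rw [pow_succ _ n, pow_succ _ n, Module.End.mul_apply, Module.End.mul_apply, antipode_sq_comul, ih]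

lemma antipode_sq_pow_counit {k H : Type*} [Field k] [Ring H] [HopfAlgebra k H] (n : ℕ) (x : H) :
    Coalgebra.counit (R := k) (((HopfAlgebra.antipode k ^ 2 : Module.End k H) ^ n) x)
      = Coalgebra.counit (R := k) x := by
  induction n generalizing x with
  | zero => rfl
  | succ n ih =>
    rw [pow_succ _ n, Module.End.mul_apply, ih, pow_two, Module.End.mul_apply,
      HopfAlgebra.counit_antipode, HopfAlgebra.counit_antipode]

lemma bialgHom_antipode_sq_pow {k H K : Type*} [Field k] [Ring H] [HopfAlgebra k H] [Ring K]
    [HopfAlgebra k K] (π : H →ₐc[k] K) (n : ℕ) (x : H) :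
    π (((HopfAlgebra.antipode k ^ 2 : Module.End k H) ^ n) x)
      = ((HopfAlgebra.antipode k ^ 2 : Module.End k K) ^ n) (π x) := by
  induction n generalizing x with
  | zero => rfl
  | succ n ih =>
    rw [pow_succ _ n, pow_succ _ n, Module.End.mul_apply, Module.End.mul_apply, ih, pow_two, pow_two,
      Module.End.mul_apply, Module.End.mul_apply, antipode_bialgHom, antipode_bialgHom]

/-- The dichotomy for the restriction to a simple subcoalgebra `C` of a linear endomorphism `F` of
`H` that respects the coalgebra structure and is invisible to `π`. -/
lemma eq_on_or_isSemisimpleRing {k H K : Type*} [Field k] [IsAlgClosed k] [CharZero k]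
    [Ring H] [HopfAlgebra k H] [FiniteDimensional k H] [Ring K] [HopfAlgebra k K]
    [FiniteDimensional k K] (π : H →ₐc[k] K) (hπ : Function.Surjective π)
    {C : Submodule k H} (hC : IsSimpleSubcoalgebra k C) (hdim : Module.finrank k C = 4)
    (hgen : Algebra.adjoin k (C : Set H) = ⊤) (F : Module.End k H)
    (hFC : ∀ c ∈ C, F c ∈ C) (hπF : ∀ c, π (F c) = π c)
    (hε : ∀ x, Coalgebra.counit (R := k) (F x) = Coalgebra.counit (R := k) x)
    (hΔ : ∀ x, TensorProduct.map F F (Coalgebra.comul x) = Coalgebra.comul (R := k) (F x)) :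
    (∀ c ∈ C, F c = c) ∨ IsSemisimpleRing K := by
  let := hC.1.coalgebra
  have hΔC (c : C) : TensorProduct.map C.subtype C.subtype (Coalgebra.comul c) =
      Coalgebra.comul (R := k) (c : H) := LinearMap.congr_fun hC.1.map_comp_comul c
  have : Nontrivial C := (Submodule.nontrivial_iff_ne_bot).mpr hC.2.1
  have : IsSimpleRing (WithConv (C →ₗ[k] k)) := isSimpleRing_dual hC.eq_bot_or_top
  let ρ : C →ₗc[k] K :=
    { toLinearMap := π.toCoalgHom.toLinearMap ∘ₗ C.subtype
      counit_comp := by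
        ext c
        exact LinearMap.congr_fun π.toCoalgHom.counit_comp (c : H)
      map_comp_comul := by
        ext c
        rw [TensorProduct.map_comp]
        simp only [LinearMap.comp_apply]
        rw [hΔC]
        exact LinearMap.congr_fun π.toCoalgHom.map_comp_comul (c : H) }
  let ψ : C →ₗc[k] C :=
    { toLinearMap := F.restrict hFC
      counit_comp := by
        ext c
        exact hε c
      map_comp_comul := by
        ext c
        apply TensorProduct.map_injective_of_flat_flat _ _ C.subtype_injective C.subtype_injective
        simp only [LinearMap.comp_apply]
        rw [hΔC, ← LinearMap.comp_apply, ← TensorProduct.map_comp, LinearMap.subtype_comp_restrict,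
          LinearMap.domRestrict, TensorProduct.map_comp, LinearMap.comp_apply, hΔC, hΔ]
        rfl }
  refine (eq_id_or_isSemisimpleRing hdim ρ ψ (fun c => hπF c) ?_).imp_left
    fun h c hc => congrArg Subtype.val (h ⟨c, hc⟩)
  have hrange : Set.range ρ = (π : H →ₐ[k] K) '' C := by
    ext x
    constructor
    · rintro ⟨c, rfl⟩
      exact ⟨c, c.2, rfl⟩
    · rintro ⟨c, hc, rfl⟩
      exact ⟨⟨c, hc⟩, rfl⟩
  rw [hrange, ← AlgHom.map_adjoin, hgen, Algebra.map_top]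
  exact (AlgHom.range_eq_top _).mpr hπ

/-- Let `π : H → K` be a surjective morphism of finite-dimensional Hopf
algebras with `K` non-semisimple, and suppose `H` is generated as an algebra by `1` and a
4-dimensional simple subcoalgebra `C` stable by `S_H²`. Then the order of `S_H²` equals the
order of `S_K²`. -/
theorem order_of_antipode_squared_eq
    (k : Type*) [Field k] [IsAlgClosed k] [CharZero k]
    (H : Type*) [Ring H] [HopfAlgebra k H] [FiniteDimensional k H]
    (K : Type*) [Ring K] [HopfAlgebra k K] [FiniteDimensional k K]
    (π : H →ₐc[k] K) (hπ : Function.Surjective π)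
    (hK : ¬ IsSemisimpleRing K)
    (C : Submodule k H) (hC : IsSimpleSubcoalgebra k C)
    (hdim : Module.finrank k C = 4)
    (hstab : ∀ c ∈ C, HopfAlgebra.antipode (R := k) (HopfAlgebra.antipode (R := k) c) ∈ C)
    (hgen : Algebra.adjoin k (C : Set H) = ⊤) :
    orderOf ((HopfAlgebra.antipode (R := k) : Module.End k H) ^ 2)
      = orderOf ((HopfAlgebra.antipode (R := k) : Module.End k K) ^ 2) := by
  rw [orderOf_eq_orderOf_iff]
  intro n
  constructor
  · intro h
    ext y
    obtain ⟨x, rfl⟩ := hπ y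
    rw [← bialgHom_antipode_sq_pow, h]
    rfl
  · intro h
    have hstab' : ∀ c ∈ C, ((HopfAlgebra.antipode k ^ 2 : Module.End k H) ^ n) c ∈ C := by
      clear h
      induction n with
      | zero => exact fun c hc => hc
      | succ n ih =>
        intro c hc
        rw [pow_succ _ n, Module.End.mul_apply]
        exact ih _ (hstab c hc)
    have hid := (eq_on_or_isSemisimpleRing π hπ hC hdim hgen _ hstab'
      (fun c => by rw [bialgHom_antipode_sq_pow, h]; rfl) (antipode_sq_pow_counit n)
      (antipode_sq_pow_comul n)).resolve_right hK
    have halg : antipodeSq k H ^ n = AlgHom.id k H :=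
      AlgHom.ext_of_adjoin_eq_top hgen fun c hc => (antipodeSq_pow_apply n c).trans (hid c hc)
    ext x
    rw [← antipodeSq_pow_apply, halg]
    rfl
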